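/- arXiv:1504.02418 — 3 statements merged into one kernel-verified Lean document; each statement's English description precedes it below -/
import Mathlib

section
/- Let G=(V,E,σ) be a finite undirected weighted graph and let s,t ∈ V be distinct. Then Mod_1(Γ(s,t)) equals the minimum value of a disconnecting set, i.e. Mod_1(Γ(s,t)) = min { Σ_{e∈D} σ(e) : D ⊆ E such that every walk from s to t traverses at least one edge of D }. -/
/-!
The argument has two halves.

The indicator function of a disconnecting set `D` is an admissible density of energy `v(D)`
(`indicator_admissible`), so the modulus is at most the minimum value of a disconnecting set.

Conversely, every admissible `ρ` has energy at least the value of some disconnecting set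
(`exists_cut_le_energy`), by a coarea argument. Let `φ x` be the `ρ`-distance from `s` to `x`,
truncated at `1`. Then `φ s = 0`, `φ t = 1`, and `|φ x - φ y| ≤ ρ e` for every edge `e = {x, y}`.
For each `r ∈ [0, 1)` the edges that cross the level `r` of `φ` form a disconnecting set, and the
average over `r` of its value is at most `∑ e, σ e * |φ x - φ y| ≤ ∑ e, σ e * ρ e`, so some level
does no worse than the average (`exists_level_le`).
-/

open scoped BigOperators

variable {V : Type*} [Fintype V] [DecidableEq V]

/-- The ρ-length of a walk: ℓ_ρ(γ) = Σ_{e∈E} N(γ,e) ρ(e), where N(γ,e) is the number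
of times the walk γ traverses the edge e. -/
noncomputable def rhoLength (G : SimpleGraph V) [DecidableRel G.Adj]
    (ρ : G.edgeSet → ℝ) {u v : V} (w : G.Walk u v) : ℝ :=
  ∑ e : G.edgeSet, (w.edges.count ↑e : ℝ) * ρ e

/-- The admissible set A(Γ): densities that are nonnegative and give every walk of Γ
ρ-length at least one. -/
def IsAdmissible (G : SimpleGraph V) [DecidableRel G.Adj]
    (Γ : Set (Σ (u : V) (v : V), G.Walk u v)) (ρ : G.edgeSet → ℝ) : Prop :=
  (∀ e, 0 ≤ ρ e) ∧ ∀ γ ∈ Γ, 1 ≤ rhoLength G ρ γ.2.2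

/-- The p-energy ℰ_p(ρ) = Σ_{e∈E} σ(e) |ρ(e)|^p, for 1 ≤ p < ∞. -/
noncomputable def energy (G : SimpleGraph V) [DecidableRel G.Adj]
    (σ : G.edgeSet → ℝ) (p : ℝ) (ρ : G.edgeSet → ℝ) : ℝ :=
  ∑ e : G.edgeSet, σ e * |ρ e| ^ p

/-- The ∞-energy ℰ_∞(ρ) = max_{e∈E} |ρ(e)|. -/
noncomputable def energyInf (G : SimpleGraph V) [DecidableRel G.Adj]
    (ρ : G.edgeSet → ℝ) : ℝ :=
  ⨆ e : G.edgeSet, |ρ e|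

/-- The p-modulus Mod_p(Γ) = inf_{ρ ∈ A(Γ)} ℰ_p(ρ), for 1 ≤ p < ∞. -/
noncomputable def modulus (G : SimpleGraph V) [DecidableRel G.Adj]
    (σ : G.edgeSet → ℝ) (p : ℝ) (Γ : Set (Σ (u : V) (v : V), G.Walk u v)) : ℝ :=
  sInf (energy G σ p '' {ρ | IsAdmissible G Γ ρ})

/-- The ∞-modulus Mod_∞(Γ) = inf_{ρ ∈ A(Γ)} ℰ_∞(ρ). -/
noncomputable def modulusInf (G : SimpleGraph V) [DecidableRel G.Adj]
    (Γ : Set (Σ (u : V) (v : V), G.Walk u v)) : ℝ :=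
  sInf (energyInf G '' {ρ | IsAdmissible G Γ ρ})

/-- The connecting family Γ(s,t): all walks that start at s and end at t. -/
def connectingFamily (G : SimpleGraph V) (s t : V) :
    Set (Σ (u : V) (v : V), G.Walk u v) :=
  {γ | γ.1 = s ∧ γ.2.1 = t}

/-- The minimum graph length ℓ(Γ) = inf_{γ ∈ Γ} ℓ(γ) (smallest number of hops). -/
noncomputable def minLength (G : SimpleGraph V)
    (Γ : Set (Σ (u : V) (v : V), G.Walk u v)) : ℕ :=
  sInf {n : ℕ | ∃ γ ∈ Γ, γ.2.2.length = n}

/-- |φ(x) - φ(y)|, the potential drop of φ : V → ℝ across an edge, as a function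
on unordered pairs. -/
noncomputable def potDrop (φ : V → ℝ) : Sym2 V → ℝ :=
  Sym2.lift ⟨fun x y => |φ x - φ y|, fun x y => abs_sub_comm (φ x) (φ y)⟩

/-- Among the levels `r ∈ [0, 1)`, some level has total weight of the intervals `[lo e, hi e)`
containing it at most the weighted sum of the lengths of these intervals. -/
lemma exists_level_le {E : Type*} [Fintype E] (c lo hi : E → ℝ) (hc : ∀ e, 0 ≤ c e)
    (hle : ∀ e, lo e ≤ hi e) :
    ∃ r ∈ Set.Ico (0 : ℝ) 1,
      ∑ e, (Set.Ico (lo e) (hi e)).indicator (fun _ => c e) r ≤ ∑ e, c e * (hi e - lo e) := by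
  have hInteg : ∀ e, MeasureTheory.Integrable
      ((Set.Ico (lo e) (hi e)).indicator (fun _ => c e)) MeasureTheory.volume := fun e =>
    (MeasureTheory.integrable_indicator_iff measurableSet_Ico).2
      (MeasureTheory.integrableOn_const (by simp))
  obtain ⟨r, hr, h⟩ := MeasureTheory.exists_le_setAverage
    (μ := MeasureTheory.volume) (s := Set.Ico (0 : ℝ) 1)
    (f := fun r => ∑ e, (Set.Ico (lo e) (hi e)).indicator (fun _ => c e) r)
    (by simp) (by simp) (MeasureTheory.integrable_finsetSum _ fun e _ => (hInteg e).integrableOn)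
  refine ⟨r, hr, h.trans ?_⟩
  rw [MeasureTheory.setAverage_eq,
    MeasureTheory.integral_finsetSum _ fun e _ => (hInteg e).integrableOn]
  simp only [MeasureTheory.measureReal_def, Real.volume_Ico, sub_zero, ENNReal.ofReal_one,
    ENNReal.toReal_one, inv_one, one_smul]
  refine Finset.sum_le_sum fun e _ => ?_
  refine (MeasureTheory.setIntegral_le_integral (hInteg e)
    (Filter.Eventually.of_forall fun x => Set.indicator_nonneg (fun _ _ => hc e) x)).trans ?_
  rw [MeasureTheory.integral_indicator measurableSet_Ico]
  simp [MeasureTheory.measureReal_def, ENNReal.toReal_ofReal (sub_nonneg.2 (hle e)), mul_comm]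

section Distance

variable (G : SimpleGraph V) [DecidableRel G.Adj] (ρ : G.edgeSet → ℝ)

/-- The `ρ`-distance from `s` to `x`, truncated at `1` (and equal to `1` if no walk joins `s`
to `x`). Including the value `1` among the candidates keeps the infimum over a nonempty set. -/
noncomputable def truncDist (s x : V) : ℝ :=
  sInf (insert 1 (Set.range fun w : G.Walk s x => rhoLength G ρ w))

variable {G ρ}

lemma rhoLength_nonneg (hρ : ∀ e, 0 ≤ ρ e) {u v : V} (w : G.Walk u v) : 0 ≤ rhoLength G ρ w :=
  Finset.sum_nonneg fun e _ => mul_nonneg (Nat.cast_nonneg _) (hρ e)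

lemma rhoLength_concat {u v x : V} (w : G.Walk u v) (h : G.Adj v x) :
    rhoLength G ρ (w.concat h) = rhoLength G ρ w + ρ ⟨s(v, x), h⟩ := by
  have hcount : ∀ e : G.edgeSet, ((w.concat h).edges.count (e : Sym2 V) : ℝ) * ρ e =
      (w.edges.count (e : Sym2 V) : ℝ) * ρ e +
        if (⟨s(v, x), h⟩ : G.edgeSet) = e then ρ e else 0 := by
    intro e
    rw [SimpleGraph.Walk.edges_concat, List.concat_eq_append, List.count_append,
      List.count_singleton]
    by_cases he : (⟨s(v, x), h⟩ : G.edgeSet) = e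
    · subst he
      simp [add_mul]
    · have he' : ¬ s(v, x) = (e : Sym2 V) := fun h' => he (Subtype.ext h')
      simp [he, he']
  unfold rhoLength
  rw [Finset.sum_congr rfl fun e _ => hcount e, Finset.sum_add_distrib]
  simp

lemma truncDist_bddBelow (hρ : ∀ e, 0 ≤ ρ e) (s x : V) :
    BddBelow (insert 1 (Set.range fun w : G.Walk s x => rhoLength G ρ w)) := by
  refine ⟨0, ?_⟩
  rintro _ (rfl | ⟨w, rfl⟩)
  · exact zero_le_one
  · exact rhoLength_nonneg hρ w

lemma truncDist_self_le (hρ : ∀ e, 0 ≤ ρ e) (s : V) : truncDist G ρ s s ≤ 0 :=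
  csInf_le (truncDist_bddBelow hρ s s)
    (Or.inr ⟨SimpleGraph.Walk.nil, by simp [rhoLength]⟩)

lemma one_le_truncDist {s t : V} (h : ∀ w : G.Walk s t, 1 ≤ rhoLength G ρ w) :
    1 ≤ truncDist G ρ s t := by
  refine le_csInf (Set.insert_nonempty _ _) ?_
  rintro _ (rfl | ⟨w, rfl⟩)
  · exact le_rfl
  · exact h w

lemma truncDist_le_add (hρ : ∀ e, 0 ≤ ρ e) (s : V) {x y : V} (h : G.Adj x y) :
    truncDist G ρ s y ≤ truncDist G ρ s x + ρ ⟨s(x, y), h⟩ := by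
  rw [← sub_le_iff_le_add]
  refine le_csInf (Set.insert_nonempty _ _) ?_
  rintro _ (rfl | ⟨w, rfl⟩)
  · have : truncDist G ρ s y ≤ 1 := csInf_le (truncDist_bddBelow hρ s y) (Or.inl rfl)
    linarith [hρ ⟨s(x, y), h⟩]
  · rw [sub_le_iff_le_add]
    exact csInf_le (truncDist_bddBelow hρ s y) (Or.inr ⟨w.concat h, rhoLength_concat w h⟩)

end Distance

/-- The coarea half: some level set of the truncated `ρ`-distance from `s` yields a disconnecting
set whose value is at most the energy of the admissible density `ρ`. -/
lemma exists_cut_le_energy (G : SimpleGraph V) [DecidableRel G.Adj]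
    (σ : G.edgeSet → ℝ) (hσ : ∀ e, 0 < σ e) (s t : V) (ρ : G.edgeSet → ℝ)
    (hρ : IsAdmissible G (connectingFamily G s t) ρ) :
    ∃ D : Finset G.edgeSet,
      (∀ γ ∈ connectingFamily G s t, ∃ e ∈ D, 0 < γ.2.2.edges.count ↑e) ∧
        ∑ e ∈ D, σ e ≤ energy G σ 1 ρ := by
  classical
  obtain ⟨hρ0, hρ1⟩ := hρ
  set φ : V → ℝ := truncDist G ρ s with hφ
  have hφt : 1 ≤ φ t := one_le_truncDist fun w => hρ1 ⟨s, t, w⟩ ⟨rfl, rfl⟩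
  -- The levels crossed by `e` are those in `[lo e, hi e)`, between the values of `φ` at its ends.
  let lo : G.edgeSet → ℝ := fun e => ((e : Sym2 V).map φ).inf
  let hi : G.edgeSet → ℝ := fun e => ((e : Sym2 V).map φ).sup
  have hle : ∀ e, lo e ≤ hi e := fun e => Sym2.inf_le_sup _
  have hdrop : ∀ e, hi e - lo e ≤ ρ e := by
    rintro ⟨e, he⟩
    induction e using Sym2.ind with
    | _ x y =>
      have hxy : G.Adj x y := he
      have h1 : φ y ≤ φ x + ρ ⟨s(x, y), he⟩ := truncDist_le_add hρ0 s hxy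
      have h2 : φ x ≤ φ y + ρ ⟨s(y, x), hxy.symm⟩ := truncDist_le_add hρ0 s hxy.symm
      have h3 : (⟨s(y, x), hxy.symm⟩ : G.edgeSet) = ⟨s(x, y), he⟩ := Subtype.ext Sym2.eq_swap
      rw [h3] at h2
      change max (φ x) (φ y) - min (φ x) (φ y) ≤ _
      rw [max_sub_min_eq_abs, abs_le]
      constructor <;> linarith
  obtain ⟨r, hr, hsum⟩ := exists_level_le σ lo hi (fun e => (hσ e).le) hle
  refine ⟨Finset.univ.filter fun e => r ∈ Set.Ico (lo e) (hi e), ?_, ?_⟩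
  · rintro ⟨u, v, w⟩ ⟨hu, hv⟩
    dsimp only at hu hv
    subst hu hv
    obtain ⟨d, hd, hd1, hd2⟩ := w.exists_boundary_dart {x | φ x ≤ r}
      ((truncDist_self_le hρ0 u).trans hr.1) (fun h => (hφt.trans h).not_gt hr.2)
    refine ⟨⟨d.edge, d.edge_mem⟩, ?_, List.count_pos_iff.2 (List.mem_map_of_mem hd)⟩
    have hd1' : φ d.fst ≤ r := hd1
    have hd2' : r < φ d.snd := not_le.1 hd2
    refine Finset.mem_filter.2 ⟨Finset.mem_univ _, ?_⟩
    change min (φ d.fst) (φ d.snd) ≤ r ∧ r < max (φ d.fst) (φ d.snd)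
    exact ⟨min_le_of_left_le hd1', lt_max_of_lt_right hd2'⟩
  · calc ∑ e ∈ Finset.univ.filter (fun e => r ∈ Set.Ico (lo e) (hi e)), σ e
        = ∑ e, (Set.Ico (lo e) (hi e)).indicator (fun _ => σ e) r := by
          rw [Finset.sum_filter]
          simp only [Set.indicator_apply]
      _ ≤ ∑ e, σ e * (hi e - lo e) := hsum
      _ ≤ energy G σ 1 ρ := by
          refine Finset.sum_le_sum fun e _ => ?_
          rw [Real.rpow_one, abs_of_nonneg (hρ0 e)]
          exact mul_le_mul_of_nonneg_left (hdrop e) (hσ e).le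

lemma indicator_admissible (G : SimpleGraph V) [DecidableRel G.Adj]
    (Γ : Set (Σ (u : V) (v : V), G.Walk u v)) (D : Finset G.edgeSet)
    (hD : ∀ γ ∈ Γ, ∃ e ∈ D, 0 < γ.2.2.edges.count ↑e) :
    IsAdmissible G Γ fun e => if e ∈ D then 1 else 0 := by
  refine ⟨fun e => by dsimp only; split_ifs <;> norm_num, fun γ hγ => ?_⟩
  obtain ⟨e, he, hpos⟩ := hD γ hγ
  have h1 : (1 : ℝ) ≤ (γ.2.2.edges.count (e : Sym2 V) : ℝ) * (if e ∈ D then 1 else 0) := by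
    rw [if_pos he, mul_one]
    exact_mod_cast hpos
  refine h1.trans (Finset.single_le_sum
    (f := fun e : G.edgeSet => (γ.2.2.edges.count (e : Sym2 V) : ℝ) * (if e ∈ D then 1 else 0))
    (fun e' _ => mul_nonneg (Nat.cast_nonneg _) ?_) (Finset.mem_univ e))
  split_ifs <;> norm_num

lemma energy_indicator (G : SimpleGraph V) [DecidableRel G.Adj]
    (σ : G.edgeSet → ℝ) (D : Finset G.edgeSet) :
    energy G σ 1 (fun e => if e ∈ D then 1 else 0) = ∑ e ∈ D, σ e := by
  simp [energy, apply_ite abs]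

/-- Mod_1(Γ(s,t)) equals the minimum value Σ_{e∈D} σ(e) over all
disconnecting sets D ⊆ E (sets of edges met by every walk from s to t). -/
theorem modulus_one_eq_min_disconnecting
    (G : SimpleGraph V) [DecidableRel G.Adj]
    (σ : G.edgeSet → ℝ) (hσ : ∀ e, 0 < σ e)
    (s t : V) (hst : s ≠ t) :
    IsLeast {x : ℝ | ∃ D : Finset G.edgeSet,
        (∀ γ ∈ connectingFamily G s t, ∃ e ∈ D, 0 < γ.2.2.edges.count ↑e) ∧
        x = ∑ e ∈ D, σ e}
      (modulus G σ 1 (connectingFamily G s t)) := by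
  -- The set of all edges disconnects because a walk between distinct vertices has an edge.
  have huniv : ∀ γ ∈ connectingFamily G s t,
      ∃ e ∈ (Finset.univ : Finset G.edgeSet), 0 < γ.2.2.edges.count ↑e := by
    rintro ⟨u, v, w⟩ ⟨hu, hv⟩
    dsimp only at hu hv
    subst hu hv
    cases w with
    | nil => exact absurd rfl hst
    | @cons _ x _ h p => exact ⟨⟨s(u, x), h⟩, Finset.mem_univ _, List.count_pos_iff.2 (by simp)⟩
  obtain ⟨D₀, hD₀, hmin⟩ := Set.exists_min_image
    {D : Finset G.edgeSet |
      ∀ γ ∈ connectingFamily G s t, ∃ e ∈ D, 0 < γ.2.2.edges.count ↑e}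
    (fun D => ∑ e ∈ D, σ e) (Set.toFinite _) ⟨Finset.univ, huniv⟩
  have hmod : modulus G σ 1 (connectingFamily G s t) = ∑ e ∈ D₀, σ e := by
    refine IsLeast.csInf_eq ⟨⟨_, indicator_admissible G _ D₀ hD₀, energy_indicator G σ D₀⟩, ?_⟩
    rintro _ ⟨ρ, hρ, rfl⟩
    obtain ⟨D, hD, hle⟩ := exists_cut_le_energy G σ hσ s t ρ hρ
    exact (hmin D hD).trans hle
  rw [hmod]
  refine ⟨⟨D₀, hD₀, rfl⟩, ?_⟩
  rintro _ ⟨D, hD, rfl⟩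
  exact hmin D hD
end

section
/- Let G=(V,E,σ) be a finite weighted graph and let Γ be a nonempty family of walks on G. Then lim_{p→∞} Mod_p(Γ)^{1/p} = 1/ℓ(Γ) = Mod_∞(Γ), where ℓ(Γ) is the minimum graph length of a walk in Γ. -/
/-!
Write `ℓ` for the minimum length of a walk in `Γ`. The argument is a sandwich for every energy at
once. From above, the constant density `1 / ℓ` is admissible, because a constant density `c` gives
a walk of length `n` the `ρ`-length `n * c` (`rhoLength_const`). From below, every admissible
density is at least `1 / ℓ` on some edge, since otherwise a shortest walk would have `ρ`-length
less than one (`IsAdmissible.exists_edge`). Hence `Mod_∞ = 1 / ℓ`, and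
`s * (1 / ℓ) ^ p ≤ Mod_p ≤ S * (1 / ℓ) ^ p` with `s` a positive lower bound of `σ` and `S` the
total weight. After taking `p`-th roots both bounds tend to `1 / ℓ`, because `s ^ (1 / p)` and
`S ^ (1 / p)` tend to `1`.
-/

open scoped BigOperators

variable {V : Type*} [Fintype V] [DecidableEq V]

theorem sum_count_edges (G : SimpleGraph V) [DecidableRel G.Adj] {u v : V} (w : G.Walk u v) :
    ∑ e : G.edgeSet, w.edges.count (e : Sym2 V) = w.length := by
  classical
  rw [← w.length_edges, ← Multiset.coe_card,
    ← Multiset.sum_count_eq_card (s := G.edgeFinset) (m := (w.edges : Multiset (Sym2 V)))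
      (fun e he => G.mem_edgeFinset.2 (w.edges_subset_edgeSet (Multiset.mem_coe.1 he)))]
  simp only [Multiset.coe_count]
  exact (Finset.sum_subtype G.edgeFinset (fun _ => G.mem_edgeFinset)
    (fun e => w.edges.count e)).symm

theorem rhoLength_const (G : SimpleGraph V) [DecidableRel G.Adj] (c : ℝ) {u v : V}
    (w : G.Walk u v) : rhoLength G (fun _ => c) w = w.length * c := by
  rw [rhoLength, ← Finset.sum_mul, ← sum_count_edges G w]
  push_cast
  rfl

theorem exists_shortest (G : SimpleGraph V) (Γ : Set (Σ (u : V) (v : V), G.Walk u v))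
    (hne : Γ.Nonempty) : ∃ γ ∈ Γ, γ.2.2.length = minLength G Γ := by
  obtain ⟨γ, hγ⟩ := hne
  exact Nat.sInf_mem (s := {n : ℕ | ∃ γ ∈ Γ, γ.2.2.length = n}) ⟨_, γ, hγ, rfl⟩

theorem minLength_pos (G : SimpleGraph V) (Γ : Set (Σ (u : V) (v : V), G.Walk u v))
    (hne : Γ.Nonempty) (hΓ : ∀ γ ∈ Γ, 0 < γ.2.2.length) : 0 < minLength G Γ := by
  obtain ⟨γ, hγ, h⟩ := exists_shortest G Γ hne
  exact h ▸ hΓ γ hγ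

theorem isAdmissible_const (G : SimpleGraph V) [DecidableRel G.Adj]
    (Γ : Set (Σ (u : V) (v : V), G.Walk u v)) (hℓ : 0 < minLength G Γ) :
    IsAdmissible G Γ (fun _ => 1 / (minLength G Γ : ℝ)) := by
  have hℓ' : (0 : ℝ) < minLength G Γ := by exact_mod_cast hℓ
  refine ⟨fun _ => by positivity, fun γ hγ => ?_⟩
  rw [rhoLength_const, mul_one_div, one_le_div hℓ']
  exact_mod_cast Nat.sInf_le (s := {n : ℕ | ∃ γ ∈ Γ, γ.2.2.length = n}) ⟨γ, hγ, rfl⟩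

/-- An admissible density cannot be below `1 / ℓ(Γ)` everywhere: a shortest walk of `Γ` would then
have `ρ`-length less than one. -/
theorem IsAdmissible.exists_edge {G : SimpleGraph V} [DecidableRel G.Adj]
    {Γ : Set (Σ (u : V) (v : V), G.Walk u v)} (hne : Γ.Nonempty) (hℓ : 0 < minLength G Γ)
    {ρ : G.edgeSet → ℝ} (hρ : IsAdmissible G Γ ρ) :
    ∃ e, 1 / (minLength G Γ : ℝ) ≤ ρ e := by
  by_contra! h
  obtain ⟨γ, hγ, hlen⟩ := exists_shortest G Γ hne
  have hℓ' : (0 : ℝ) < minLength G Γ := by exact_mod_cast hℓ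
  have h1 : rhoLength G ρ γ.2.2 < rhoLength G (fun _ => 1 / (minLength G Γ : ℝ)) γ.2.2 := by
    -- Strictness needs an edge that the walk really traverses.
    have hsum := sum_count_edges G γ.2.2
    obtain ⟨e, -, he⟩ : ∃ e ∈ Finset.univ, γ.2.2.edges.count ((e : G.edgeSet) : Sym2 V) ≠ 0 :=
      Finset.exists_ne_zero_of_sum_ne_zero (by omega)
    refine Finset.sum_lt_sum
      (fun e _ => mul_le_mul_of_nonneg_left (h e).le (Nat.cast_nonneg _)) ⟨e, Finset.mem_univ e, ?_⟩
    exact mul_lt_mul_of_pos_left (h e) (by exact_mod_cast Nat.pos_of_ne_zero he)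
  rw [rhoLength_const, hlen, mul_one_div_cancel hℓ'.ne'] at h1
  exact absurd (hρ.2 γ hγ) h1.not_ge

theorem modulusInf_eq (G : SimpleGraph V) [DecidableRel G.Adj]
    (Γ : Set (Σ (u : V) (v : V), G.Walk u v)) (hne : Γ.Nonempty) (hℓ : 0 < minLength G Γ) :
    modulusInf G Γ = 1 / (minLength G Γ : ℝ) := by
  have hadm := isAdmissible_const G Γ hℓ
  obtain ⟨e₀, -⟩ := hadm.exists_edge hne hℓ
  haveI : Nonempty G.edgeSet := ⟨e₀⟩
  refine IsLeast.csInf_eq ⟨⟨_, hadm, ?_⟩, ?_⟩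
  · rw [energyInf, ciSup_const, abs_of_nonneg (by positivity)]
  · rintro _ ⟨ρ, hρ, rfl⟩
    obtain ⟨e, he⟩ := IsAdmissible.exists_edge hne hℓ hρ
    exact (he.trans (le_abs_self _)).trans
      (le_ciSup (f := fun e => |ρ e|) (Set.finite_range _).bddAbove e)

theorem modulus_bounds (G : SimpleGraph V) [DecidableRel G.Adj] (σ : G.edgeSet → ℝ)
    (hσ : ∀ e, 0 < σ e) (Γ : Set (Σ (u : V) (v : V), G.Walk u v)) (hne : Γ.Nonempty)
    (hℓ : 0 < minLength G Γ) {s : ℝ} (hs : ∀ e, s ≤ σ e) {p : ℝ} (hp : 0 < p) :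
    s * (1 / (minLength G Γ : ℝ)) ^ p ≤ modulus G σ p Γ ∧
      modulus G σ p Γ ≤ (∑ e, σ e) * (1 / (minLength G Γ : ℝ)) ^ p := by
  have hadm := isAdmissible_const G Γ hℓ
  have hlow : s * (1 / (minLength G Γ : ℝ)) ^ p ∈
      lowerBounds (energy G σ p '' {ρ | IsAdmissible G Γ ρ}) := by
    rintro _ ⟨ρ, hρ, rfl⟩
    obtain ⟨e, he⟩ := IsAdmissible.exists_edge hne hℓ hρ
    calc s * (1 / (minLength G Γ : ℝ)) ^ p ≤ σ e * |ρ e| ^ p := by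
          refine mul_le_mul (hs e) ?_ (by positivity) (hσ e).le
          exact Real.rpow_le_rpow (by positivity) (he.trans (le_abs_self _)) hp.le
      _ ≤ energy G σ p ρ :=
          Finset.single_le_sum (f := fun e => σ e * |ρ e| ^ p)
            (fun e _ => mul_nonneg (hσ e).le (by positivity)) (Finset.mem_univ e)
  refine ⟨le_csInf ⟨_, _, hadm, rfl⟩ hlow, csInf_le ⟨_, hlow⟩ ⟨_, hadm, ?_⟩⟩
  rw [energy, abs_of_nonneg (by positivity), Finset.sum_mul]

theorem tendsto_root (c ℓ : ℝ) (hc : 0 < c) (hℓ : 0 ≤ ℓ) :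
    Filter.Tendsto (fun p : ℝ => (c * ℓ ^ p) ^ (1 / p)) Filter.atTop (nhds ℓ) := by
  have h0 : Filter.Tendsto (fun p : ℝ => 1 / p) Filter.atTop (nhds 0) := by
    simpa only [one_div] using tendsto_inv_atTop_zero (𝕜 := ℝ)
  have h1 := ((Real.continuous_const_rpow hc.ne').tendsto 0).comp h0
  rw [Real.rpow_zero] at h1
  have h2 := h1.mul_const ℓ
  rw [one_mul] at h2
  refine h2.congr' ?_
  filter_upwards [Filter.eventually_gt_atTop 0] with p hp
  rw [Function.comp_apply, Real.mul_rpow hc.le (by positivity), ← Real.rpow_mul hℓ,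
    mul_one_div_cancel hp.ne', Real.rpow_one]

/-- lim_{p→∞} Mod_p(Γ)^{1/p} = 1/ℓ(Γ) = Mod_∞(Γ). -/
theorem modulus_rpow_tendsto_modulusInf
    (G : SimpleGraph V) [DecidableRel G.Adj]
    (σ : G.edgeSet → ℝ) (hσ : ∀ e, 0 < σ e)
    (Γ : Set (Σ (u : V) (v : V), G.Walk u v))
    (hne : Γ.Nonempty) (hΓ : ∀ γ ∈ Γ, 0 < γ.2.2.length) :
    Filter.Tendsto (fun p : ℝ => (modulus G σ p Γ) ^ (1 / p)) Filter.atTop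
        (nhds (1 / (minLength G Γ : ℝ))) ∧
    modulusInf G Γ = 1 / (minLength G Γ : ℝ) := by
  have hℓ := minLength_pos G Γ hne hΓ
  refine ⟨?_, modulusInf_eq G Γ hne hℓ⟩
  obtain ⟨e₀, -⟩ := (isAdmissible_const G Γ hℓ).exists_edge hne hℓ
  haveI : Nonempty G.edgeSet := ⟨e₀⟩
  obtain ⟨m, hm⟩ := Finite.exists_min σ
  have hS : 0 < ∑ e, σ e := Finset.sum_pos (fun e _ => hσ e) Finset.univ_nonempty
  have hb := fun {p : ℝ} (hp : 0 < p) => modulus_bounds G σ hσ Γ hne hℓ hm hp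
  have hlow : ∀ p : ℝ, 0 ≤ σ m * (1 / (minLength G Γ : ℝ)) ^ p := fun p =>
    mul_nonneg (hσ m).le (by positivity)
  refine tendsto_of_tendsto_of_tendsto_of_le_of_le'
    (tendsto_root (σ m) _ (hσ m) (by positivity)) (tendsto_root _ _ hS (by positivity)) ?_ ?_
  · filter_upwards [Filter.eventually_gt_atTop 0] with p hp
    exact Real.rpow_le_rpow (hlow p) (hb hp).1 (by positivity)
  · filter_upwards [Filter.eventually_gt_atTop 0] with p hp
    exact Real.rpow_le_rpow ((hlow p).trans (hb hp).1) (hb hp).2 (by positivity)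
end

section
/- Let G=(V,E,σ) be a finite weighted graph and let Γ be a nonempty family of walks on G. Then for all 1 ≤ p < q < ∞, σ(E)^{-1/p} Mod_p(Γ)^{1/p} ≤ σ(E)^{-1/q} Mod_q(Γ)^{1/q}, where σ(E) = Σ_{e∈E} σ(e); that is, the normalized quantity p ↦ σ(E)^{-1/p} Mod_p(Γ)^{1/p} is nondecreasing on [1,∞). -/
/-!
Dividing `σ` by its total mass `σ(E)` makes it a probability measure on the edges, and
`(ℰ_p(ρ) / σ(E))^{1/p}` is the `L^p`-norm of `ρ` for that measure, which is nondecreasing in `p`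
by Jensen's inequality (`energy_div_rpow_le`). Since the admissible set does not depend on `p`,
taking the infimum over it preserves the inequality. That set is nonempty (`isAdmissible_one`),
so the infimum is not the junk value of an empty `sInf`; and `σ(E) > 0`, because a walk of `Γ`
traverses an edge.
-/

open scoped BigOperators

variable {V : Type*} [Fintype V] [DecidableEq V]

/-- Every walk with at least one step traverses some edge of the graph. -/
lemma exists_edge_of_length_pos (G : SimpleGraph V) {u v : V} (w : G.Walk u v)
    (hw : 0 < w.length) : ∃ e : G.edgeSet, (e : Sym2 V) ∈ w.edges := by
  have hlen : 0 < w.edges.length := by rwa [SimpleGraph.Walk.length_edges]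
  obtain ⟨e, he⟩ := List.exists_mem_of_length_pos hlen
  exact ⟨⟨e, w.edges_subset_edgeSet he⟩, he⟩

/-- The constant density `1` is admissible as soon as all walks of `Γ` have a step, so the
infimum defining the modulus is taken over a nonempty set. -/
lemma isAdmissible_one (G : SimpleGraph V) [DecidableRel G.Adj]
    (Γ : Set (Σ (u : V) (v : V), G.Walk u v)) (hΓ : ∀ γ ∈ Γ, 0 < γ.2.2.length) :
    IsAdmissible G Γ (fun _ => 1) := by
  refine ⟨fun _ => zero_le_one, fun γ hγ => ?_⟩
  obtain ⟨e, he⟩ := exists_edge_of_length_pos G γ.2.2 (hΓ γ hγ)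
  unfold rhoLength
  have h1 : (1 : ℝ) ≤ (γ.2.2.edges.count (e : Sym2 V) : ℝ) * 1 := by
    rw [mul_one]
    exact_mod_cast List.count_pos_iff.2 he
  refine h1.trans ?_
  exact Finset.single_le_sum
    (f := fun e : G.edgeSet => (γ.2.2.edges.count (e : Sym2 V) : ℝ) * 1)
    (fun i _ => by positivity) (Finset.mem_univ e)

lemma energy_nonneg (G : SimpleGraph V) [DecidableRel G.Adj]
    (σ : G.edgeSet → ℝ) (hσ : ∀ e, 0 < σ e) (p : ℝ) (ρ : G.edgeSet → ℝ) :
    0 ≤ energy G σ p ρ :=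
  Finset.sum_nonneg fun e _ => mul_nonneg (hσ e).le (Real.rpow_nonneg (abs_nonneg _) _)

lemma modulus_nonneg (G : SimpleGraph V) [DecidableRel G.Adj]
    (σ : G.edgeSet → ℝ) (hσ : ∀ e, 0 < σ e) (p : ℝ)
    (Γ : Set (Σ (u : V) (v : V), G.Walk u v)) : 0 ≤ modulus G σ p Γ := by
  apply Real.sInf_nonneg
  rintro _ ⟨ρ, -, rfl⟩
  exact energy_nonneg G σ hσ p ρ

lemma modulus_le_energy (G : SimpleGraph V) [DecidableRel G.Adj]
    (σ : G.edgeSet → ℝ) (hσ : ∀ e, 0 < σ e) (p : ℝ)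
    (Γ : Set (Σ (u : V) (v : V), G.Walk u v)) (ρ : G.edgeSet → ℝ)
    (hρ : IsAdmissible G Γ ρ) : modulus G σ p Γ ≤ energy G σ p ρ := by
  refine csInf_le ⟨0, ?_⟩ ⟨ρ, hρ, rfl⟩
  rintro _ ⟨ρ', -, rfl⟩
  exact energy_nonneg G σ hσ p ρ'

/-- Jensen's inequality for `t ↦ t ^ (q / p)` and the probability weights `σ / σ(E)`. -/
lemma energy_div_rpow_le (G : SimpleGraph V) [DecidableRel G.Adj]
    (σ : G.edgeSet → ℝ) (hσ : ∀ e, 0 < σ e) (hS : 0 < ∑ e : G.edgeSet, σ e)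
    (p q : ℝ) (hp : 0 < p) (hpq : p ≤ q) (ρ : G.edgeSet → ℝ) :
    (energy G σ p ρ / ∑ e : G.edgeSet, σ e) ^ (q / p)
      ≤ energy G σ q ρ / ∑ e : G.edgeSet, σ e := by
  have h := Real.rpow_arith_mean_le_arith_mean_rpow Finset.univ
    (fun e => σ e / ∑ e : G.edgeSet, σ e) (fun e => |ρ e| ^ p)
    (fun e _ => div_nonneg (hσ e).le hS.le)
    (by rw [← Finset.sum_div, div_self hS.ne'])
    (fun e _ => Real.rpow_nonneg (abs_nonneg _) _)
    ((one_le_div hp).2 hpq)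
  have hpow : ∀ e, (|ρ e| ^ p) ^ (q / p) = |ρ e| ^ q := fun e => by
    rw [← Real.rpow_mul (abs_nonneg _), mul_div_cancel₀ q hp.ne']
  simpa only [hpow, div_mul_eq_mul_div, ← Finset.sum_div, energy] using h

/-- for 1 ≤ p < q < ∞,
σ(E)^{-1/p} Mod_p(Γ)^{1/p} ≤ σ(E)^{-1/q} Mod_q(Γ)^{1/q}: the normalized modulus is
nondecreasing in p. -/
theorem normalized_modulus_monotone_in_p
    (G : SimpleGraph V) [DecidableRel G.Adj]
    (σ : G.edgeSet → ℝ) (hσ : ∀ e, 0 < σ e)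
    (Γ : Set (Σ (u : V) (v : V), G.Walk u v))
    (hne : Γ.Nonempty) (hΓ : ∀ γ ∈ Γ, 0 < γ.2.2.length)
    (p q : ℝ) (hp : 1 ≤ p) (hpq : p < q) :
    (∑ e : G.edgeSet, σ e) ^ (-(1 / p)) * (modulus G σ p Γ) ^ (1 / p)
      ≤ (∑ e : G.edgeSet, σ e) ^ (-(1 / q)) * (modulus G σ q Γ) ^ (1 / q) := by
  obtain ⟨γ, hγ⟩ := hne
  obtain ⟨e₀, -⟩ := exists_edge_of_length_pos G γ.2.2 (hΓ γ hγ)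
  have hS : 0 < ∑ e : G.edgeSet, σ e := Finset.sum_pos (fun e _ => hσ e) ⟨e₀, Finset.mem_univ _⟩
  have hp0 : 0 < p := by linarith
  have hq0 : 0 < q := by linarith
  have hMp := modulus_nonneg G σ hσ p Γ
  have hMq := modulus_nonneg G σ hσ q Γ
  have key : (modulus G σ p Γ / ∑ e : G.edgeSet, σ e) ^ (q / p)
      ≤ modulus G σ q Γ / ∑ e : G.edgeSet, σ e := by
    rw [le_div_iff₀ hS]
    refine le_csInf ⟨_, _, isAdmissible_one G Γ hΓ, rfl⟩ ?_
    rintro _ ⟨ρ, hρ, rfl⟩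
    rw [← le_div_iff₀ hS]
    refine le_trans ?_ (energy_div_rpow_le G σ hσ hS p q hp0 hpq.le ρ)
    have := modulus_le_energy G σ hσ p Γ ρ hρ
    gcongr
  have norm_eq : ∀ r M : ℝ, 0 ≤ M →
      (∑ e : G.edgeSet, σ e) ^ (-(1 / r)) * M ^ (1 / r)
        = (M / ∑ e : G.edgeSet, σ e) ^ (1 / r) := fun r M hM => by
    rw [Real.div_rpow hM hS.le, Real.rpow_neg hS.le]
    exact (div_eq_inv_mul _ _).symm
  rw [norm_eq p _ hMp, norm_eq q _ hMq]
  have hexp : 1 / p = q / p * (1 / q) := by field_simp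
  have hbase := div_nonneg hMp hS.le
  rw [hexp, Real.rpow_mul hbase]
  exact Real.rpow_le_rpow (Real.rpow_nonneg hbase _) key (by positivity)
end
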